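/- arXiv:0812.4761 — 2 statements merged into one kernel-verified Lean document; each statement's English description precedes it below -/
import Mathlib

section
/- Let X be a compact metrizable space, T : X → X continuous with the measure-theoretic entropy map μ ↦ h_μ(T) finite and upper semi-continuous on the space M(X,T) of T-invariant Borel probability measures, and let φ ∈ C(X). Define U on the space of finite signed Borel measures by U(μ) = −∫φ dμ − h_μ(T) if μ ∈ M(X,T), and U(μ) = +∞ otherwise. Then U is convex, lower semi-continuous with values in (−∞, +∞], and its Legendre–Fenchel transform (with respect to the duality between signed measures and C(X)) is ψ ↦ P(T, φ+ψ). -/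
open MeasureTheory

lemma aux_int {X : Type*} [MetricSpace X] [CompactSpace X] [MeasurableSpace X] [BorelSpace X]
    (μ : Measure X) [IsFiniteMeasure μ] (ψ : C(X, ℝ)) : Integrable (fun x => ψ x) μ :=
  ψ.continuous.integrable_of_hasCompactSupport (HasCompactSupport.of_compactSpace _)

noncomputable def auxDual {X : Type*} [MetricSpace X] [CompactSpace X] [MeasurableSpace X]
    [BorelSpace X] (μ : ProbabilityMeasure X) : WeakDual ℝ C(X, ℝ) :=
  StrongDual.toWeakDual (LinearMap.mkContinuous
    { toFun := fun ψ : C(X, ℝ) => ∫ x, ψ x ∂(μ : Measure X)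
      map_add' := fun f g => by
        simpa using integral_add (aux_int (μ : Measure X) f) (aux_int (μ : Measure X) g)
      map_smul' := fun c f => by
        simp [integral_const_mul] } 1 (fun ψ => by
      have := norm_integral_le_of_norm_le_const (μ := (μ : Measure X)) (f := fun x => ψ x)
        (C := ‖ψ‖) (Filter.Eventually.of_forall fun x => ψ.norm_coe_le_norm x)
      simpa using this))

lemma auxDual_apply {X : Type*} [MetricSpace X] [CompactSpace X] [MeasurableSpace X]
    [BorelSpace X] (μ : ProbabilityMeasure X) (ψ : C(X, ℝ)) :
    auxDual μ ψ = ∫ x, ψ x ∂(μ : Measure X) := rfl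

lemma auxDual_continuous {X : Type*} [MetricSpace X] [CompactSpace X] [MeasurableSpace X]
    [BorelSpace X] : Continuous (auxDual (X := X)) :=
  WeakDual.continuous_of_continuous_eval fun ψ => by
    simp only [auxDual_apply]
    exact ProbabilityMeasure.continuous_integral_continuousMap ψ

lemma aux_closed {X : Type*} [MetricSpace X] [CompactSpace X] [MeasurableSpace X]
    [BorelSpace X] {T : X → X} (hT : Continuous T) :
    IsClosed {μ : ProbabilityMeasure X | (μ : Measure X).map T = (μ : Measure X)} := by
  have := isClosed_eq (ProbabilityMeasure.continuous_map hT) continuous_id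
  convert this using 2
  ext μ
  rw [← ProbabilityMeasure.toMeasure_injective.eq_iff]
  rfl

lemma aux_mix {X : Type*} [MetricSpace X] [CompactSpace X] [MeasurableSpace X]
    [BorelSpace X] {T : X → X} (hT : Continuous T) (μ ν : ProbabilityMeasure X)
    (hμ : (μ : Measure X).map T = (μ : Measure X)) (hν : (ν : Measure X).map T = (ν : Measure X))
    (a b : NNReal) (hab : a + b = 1) : ∃ ρ : ProbabilityMeasure X,
      (ρ : Measure X).map T = (ρ : Measure X) ∧
      (ρ : Measure X) = a • (μ : Measure X) + b • (ν : Measure X) ∧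
      ∀ ψ : C(X, ℝ), ∫ x, ψ x ∂(ρ : Measure X)
        = a * ∫ x, ψ x ∂(μ : Measure X) + b * ∫ x, ψ x ∂(ν : Measure X) := by
  refine ⟨⟨a • (μ : Measure X) + b • (ν : Measure X), ⟨?_⟩⟩, ?_, rfl, ?_⟩
  · simp only [Measure.add_apply, Measure.smul_apply, measure_univ]
    rw [ENNReal.smul_def, ENNReal.smul_def]
    simp only [smul_eq_mul, mul_one]
    exact_mod_cast hab
  · simp only [ProbabilityMeasure.coe_mk]
    rw [Measure.map_add _ _ hT.measurable, Measure.map_smul, Measure.map_smul, hμ, hν]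
  · intro ψ
    simp only [ProbabilityMeasure.coe_mk]
    rw [integral_add_measure (aux_int _ ψ) (aux_int _ ψ), integral_smul_nnreal_measure,
      integral_smul_nnreal_measure]
    rfl

/-- With entropy finite, affine and upper semicontinuous on the set of
invariant measures, and pressure `P` characterized by the variational principle, the
function `U` (equal to `−∫φ dμ − h_μ(T)` on invariant probability measures, viewed inside
the dual of `C(X)` -- i.e. the space of finite signed Borel measures with the weak*
topology -- and `+∞` elsewhere) is convex, lower semicontinuous, `> −∞`, and its
Legendre–Fenchel transform is `ψ ↦ P(T, φ+ψ)`. -/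
theorem stmt_2 {X : Type*} [MetricSpace X] [CompactSpace X] [MeasurableSpace X] [BorelSpace X]
    (T : X → X) (hT : Continuous T)
    (hent : ProbabilityMeasure X → ℝ)
    (hent_usc : UpperSemicontinuousOn hent
      {μ : ProbabilityMeasure X | (μ : Measure X).map T = (μ : Measure X)})
    (hent_affine : ∀ μ ν ρ : ProbabilityMeasure X,
      (μ : Measure X).map T = (μ : Measure X) → (ν : Measure X).map T = (ν : Measure X) →
      (ρ : Measure X).map T = (ρ : Measure X) → ∀ a b : NNReal, a + b = 1 →
      (ρ : Measure X) = a • (μ : Measure X) + b • (ν : Measure X) →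
      hent ρ = a * hent μ + b * hent ν)
    (P : C(X, ℝ) → ℝ)
    (hP : ∀ ψ : C(X, ℝ), IsLUB {r : ℝ | ∃ μ : ProbabilityMeasure X,
        (μ : Measure X).map T = (μ : Measure X) ∧
        r = hent μ + ∫ x, ψ x ∂(μ : Measure X)} (P ψ))
    (φ : C(X, ℝ))
    (U : WeakDual ℝ C(X, ℝ) → EReal)
    (hU1 : ∀ (L : WeakDual ℝ C(X, ℝ)) (μ : ProbabilityMeasure X),
        (μ : Measure X).map T = (μ : Measure X) →
        (∀ ψ : C(X, ℝ), L ψ = ∫ x, ψ x ∂(μ : Measure X)) →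
        U L = ((- ∫ x, φ x ∂(μ : Measure X) - hent μ : ℝ) : EReal))
    (hU2 : ∀ L : WeakDual ℝ C(X, ℝ),
        (¬ ∃ μ : ProbabilityMeasure X, (μ : Measure X).map T = (μ : Measure X) ∧
          ∀ ψ : C(X, ℝ), L ψ = ∫ x, ψ x ∂(μ : Measure X)) → U L = ⊤) :
    (∀ L, U L ≠ ⊥) ∧
    (∀ L L' : WeakDual ℝ C(X, ℝ), ∀ a b : ℝ, 0 ≤ a → 0 ≤ b → a + b = 1 →
      U (a • L + b • L') ≤ (a : EReal) * U L + (b : EReal) * U L') ∧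
    LowerSemicontinuous U ∧
    (∀ ψ : C(X, ℝ),
      (⨆ L : WeakDual ℝ C(X, ℝ), ((L ψ : EReal) - U L)) = ((P (φ + ψ) : ℝ) : EReal)) := by
  have hbot : ∀ L, U L ≠ ⊥ := by
    intro L
    by_cases h : ∃ μ : ProbabilityMeasure X, (μ : Measure X).map T = (μ : Measure X) ∧
          ∀ ψ : C(X, ℝ), L ψ = ∫ x, ψ x ∂(μ : Measure X)
    · obtain ⟨μ, h1, h2⟩ := h
      rw [hU1 L μ h1 h2]
      exact EReal.coe_ne_bot _
    · rw [hU2 L h]; simp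
  refine ⟨hbot, ?_, ?_, ?_⟩
  · intro L L' a b ha hb hab
    rcases ha.eq_or_lt with rfl | ha'
    · have : b = 1 := by linarith
      subst this
      simp
    rcases hb.eq_or_lt with rfl | hb'
    · have : a = 1 := by linarith
      subst this
      simp
    have key : ∀ (c : ℝ), 0 < c → ∀ M, (c : EReal) * U M ≠ ⊥ := by
      intro c hc M
      by_cases h : U M = ⊤
      · rw [h, EReal.coe_mul_top_of_pos hc]; simp
      · lift U M to ℝ using ⟨h, hbot M⟩ with u
        rw [← EReal.coe_mul]; exact EReal.coe_ne_bot _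
    by_cases h : ∃ μ : ProbabilityMeasure X, (μ : Measure X).map T = (μ : Measure X) ∧
          ∀ ψ : C(X, ℝ), L ψ = ∫ x, ψ x ∂(μ : Measure X)
    swap
    · rw [hU2 L h, EReal.coe_mul_top_of_pos ha', EReal.top_add_of_ne_bot (key b hb' L')]
      exact le_top
    by_cases h' : ∃ μ : ProbabilityMeasure X, (μ : Measure X).map T = (μ : Measure X) ∧
          ∀ ψ : C(X, ℝ), L' ψ = ∫ x, ψ x ∂(μ : Measure X)
    swap
    · rw [hU2 L' h', EReal.coe_mul_top_of_pos hb', EReal.add_top_of_ne_bot (key a ha' L)]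
      exact le_top
    obtain ⟨μ, hμ, hLμ⟩ := h
    obtain ⟨ν, hν, hLν⟩ := h'
    lift a to NNReal using ha
    lift b to NNReal using hb
    have hab' : a + b = 1 := by exact_mod_cast hab
    obtain ⟨ρ, hρ, hρe, hρi⟩ := aux_mix hT μ ν hμ hν a b hab'
    have h1 := hent_affine μ ν ρ hμ hν hρ a b hab' hρe
    rw [hU1 L μ hμ hLμ, hU1 L' ν hν hLν, hU1 _ ρ hρ (fun ψ => by
      rw [hρi, ← hLμ, ← hLν]; rfl), ← EReal.coe_mul, ← EReal.coe_mul, ← EReal.coe_add,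
      EReal.coe_le_coe_iff, hρi φ, h1]
    apply le_of_eq
    ring
  · rw [lowerSemicontinuous_iff_isClosed_preimage]
    intro c
    induction c with
    | bot =>
      convert isClosed_empty
      ext L
      simpa using hbot L
    | top => simp
    | coe c =>
      set M := {μ : ProbabilityMeasure X | (μ : Measure X).map T = (μ : Measure X)} with hM
      have hlsc : LowerSemicontinuousOn
          (fun μ : ProbabilityMeasure X => - ∫ x, φ x ∂(μ : Measure X) + - hent μ) M := by
        apply LowerSemicontinuousOn.add
        · exact ((ProbabilityMeasure.continuous_integral_continuousMap φ).neg).lowerSemicontinuous.lowerSemicontinuousOn M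
        · intro μ hμ y hy
          have := hent_usc μ hμ (-y) (by simp only at hy; linarith)
          filter_upwards [this] with z hz
          have hz2 : hent z < -y := hz
          show y < - hent z
          linarith
      have hcpt := hlsc.isCompact_inter_preimage_Iic (aux_closed hT).isCompact c
      have := (hcpt.image auxDual_continuous).isClosed
      convert this using 1
      ext L
      simp only [Set.mem_preimage, Set.mem_Iic, Set.mem_image, Set.mem_inter_iff]
      constructor
      · intro hL
        have h : ∃ μ : ProbabilityMeasure X, (μ : Measure X).map T = (μ : Measure X) ∧
            ∀ ψ : C(X, ℝ), L ψ = ∫ x, ψ x ∂(μ : Measure X) := by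
          by_contra h
          rw [hU2 L h] at hL
          simp at hL
        obtain ⟨μ, hμ, hLμ⟩ := h
        rw [hU1 L μ hμ hLμ, EReal.coe_le_coe_iff] at hL
        refine ⟨μ, ⟨hμ, by linarith⟩, ?_⟩
        refine DFunLike.ext _ _ fun ψ => ?_
        rw [auxDual_apply, hLμ]
      · rintro ⟨μ, ⟨hμ, hc⟩, rfl⟩
        rw [hU1 _ μ hμ (auxDual_apply μ), EReal.coe_le_coe_iff]
        linarith
  · intro ψ
    have hadd : ∀ μ : ProbabilityMeasure X, ∫ x, (φ + ψ) x ∂(μ : Measure X)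
        = ∫ x, φ x ∂(μ : Measure X) + ∫ x, ψ x ∂(μ : Measure X) := fun μ => by
      simpa using integral_add (aux_int (μ : Measure X) φ) (aux_int (μ : Measure X) ψ)
    apply le_antisymm
    · apply iSup_le
      intro L
      by_cases h : ∃ μ : ProbabilityMeasure X, (μ : Measure X).map T = (μ : Measure X) ∧
          ∀ ψ : C(X, ℝ), L ψ = ∫ x, ψ x ∂(μ : Measure X)
      · obtain ⟨μ, hμ, hLμ⟩ := h
        rw [hU1 L μ hμ hLμ, ← EReal.coe_sub, EReal.coe_le_coe_iff, hLμ]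
        have := (hP (φ + ψ)).1 ⟨μ, hμ, rfl⟩
        rw [hadd] at this
        linarith
      · rw [hU2 L h]; simp
    · apply le_of_forall_lt
      intro c hc
      obtain ⟨r, hcr, hr⟩ := EReal.lt_iff_exists_real_btwn.1 hc
      rw [EReal.coe_lt_coe_iff] at hr
      obtain ⟨s, ⟨μ, hμ, rfl⟩, hs, -⟩ := (hP (φ + ψ)).exists_between hr
      refine hcr.trans (lt_of_lt_of_le ?_ (le_iSup _ (auxDual μ)))
      rw [hU1 _ μ hμ (auxDual_apply μ), ← EReal.coe_sub, EReal.coe_lt_coe_iff, auxDual_apply]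
      rw [hadd] at hs
      linarith
end

section
/- Let T be a rational map of degree at least two and φ : J(T) → ℝ continuous. Then there exist λ > 0 and a Borel probability measure η supported on the Julia set J(T) such that ℒ_φ* η = λ η, where ℒ_φ is the Ruelle–Perron–Frobenius transfer operator. -/
open MeasureTheory

/-- The Ruelle–Perron–Frobenius transfer operator
`ℒ_φ(ψ)(x) = Σ_{y ∈ T⁻¹(x)} deg_T(y) exp(φ(y)) ψ(y)`. -/
noncomputable def transferOp {X : Type*} (T : X → X) (deg : X → ℕ) (φ : X → ℝ)
    (ψ : X → ℝ) (x : X) : ℝ :=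
  ∑ᶠ y ∈ T ⁻¹' {x}, (deg y : ℝ) * Real.exp (φ y) * ψ y

theorem aux_riesz {X : Type*} [MetricSpace X] [CompactSpace X]
    [MeasurableSpace X] [BorelSpace X] (F : C(X, ℝ) →ₗ[ℝ] ℝ)
    (hpos : ∀ f : C(X, ℝ), (∀ x, 0 ≤ f x) → 0 ≤ F f) (h1 : F 1 = 1) :
    ∃ η : ProbabilityMeasure X, ∀ ψ : C(X, ℝ), ∫ x, ψ x ∂(η : Measure X) = F ψ := by
  let G₀ : CompactlySupportedContinuousMap X ℝ →ₗ[ℝ] ℝ :=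
    { toFun := fun f => F f.toContinuousMap
      map_add' := fun f g => F.map_add f.toContinuousMap g.toContinuousMap
      map_smul' := fun c f => F.map_smul c f.toContinuousMap }
  let G : CompactlySupportedContinuousMap X ℝ →ₚ[ℝ] ℝ :=
    PositiveLinearMap.mk₀ G₀ (fun f hf => hpos _ (fun x => hf x))
  have key : ∀ ψ : C(X, ℝ), ∫ x, ψ x ∂(RealRMK.rieszMeasure G) = F ψ := fun ψ =>
    RealRMK.integral_rieszMeasure G (CompactlySupportedContinuousMap.continuousMapEquiv ψ)
  have hp : IsProbabilityMeasure (RealRMK.rieszMeasure G) := by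
    have := key 1
    rw [h1] at this
    simp only [ContinuousMap.one_apply, integral_const, smul_eq_mul, mul_one] at this
    exact ⟨by simpa [Measure.real, ENNReal.toReal_eq_one_iff] using this⟩
  exact ⟨⟨RealRMK.rieszMeasure G, hp⟩, key⟩

theorem aux_exists_min {X : Type*} [MetricSpace X] [CompactSpace X] [Nonempty X]
    (f : C(X, ℝ)) : ∃ x, ∀ y, f x ≤ f y := by
  obtain ⟨x, -, hx⟩ := isCompact_univ.exists_isMinOn (Set.univ_nonempty (α := X))
    f.continuous.continuousOn
  exact ⟨x, fun y => hx (Set.mem_univ y)⟩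

theorem aux_eigen {X : Type*} [MetricSpace X] [CompactSpace X] [Nonempty X]
    (L : C(X, ℝ) →ₗ[ℝ] C(X, ℝ))
    (hpos : ∀ f : C(X, ℝ), (∀ x, 0 ≤ f x) → ∀ x, 0 ≤ L f x) :
    ∃ (lam : ℝ) (F : C(X, ℝ) →ₗ[ℝ] ℝ), (∀ f : C(X, ℝ), (∀ x, 0 ≤ f x) → 0 ≤ F f) ∧
      F 1 = 1 ∧ ∀ f, F (L f) = lam * F f := by
  let S : Set ℝ := {s | ∃ g : C(X, ℝ), (∀ x, 0 < g x) ∧ ∀ x, L g x ≤ s * g x}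
  have hSne : S.Nonempty :=
    ⟨‖L 1‖, 1, fun x => by simp, fun x => by
      simpa using (le_abs_self _).trans ((L 1).norm_coe_le_norm x)⟩
  have hSb : BddBelow S := by
    refine ⟨0, ?_⟩
    rintro s ⟨g, hg, hs⟩
    obtain ⟨x⟩ := ‹Nonempty X›
    have h0 := hpos g (fun x => (hg x).le) x
    exact nonneg_of_mul_nonneg_left (h0.trans (hs x)) (hg x)
  set lam := sInf S with hlam
  -- no strict subsolution at the critical value
  have hno : ∀ h : C(X, ℝ), ¬ ∀ x, L h x < lam * h x := by
    intro h hh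
    by_cases hp : ∀ x, 0 < h x
    · -- then `lam` can be lowered
      let q : C(X, ℝ) := ⟨fun x => (lam * h x - L h x) / h x,
        Continuous.div (by fun_prop) (by fun_prop) (fun x => (hp x).ne')⟩
      obtain ⟨x₀, hx₀⟩ := aux_exists_min q
      have hq : 0 < q x₀ := div_pos (sub_pos.2 (hh x₀)) (hp x₀)
      have hmem : lam - q x₀ ∈ S := by
        refine ⟨h, hp, fun x => ?_⟩
        have h2 : q x₀ ≤ (lam * h x - L h x) / h x := hx₀ x
        rw [le_div_iff₀ (hp x)] at h2
        linarith
      have := csInf_le hSb hmem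
      linarith
    · push Not at hp
      obtain ⟨x₁, hx₁⟩ := hp
      obtain ⟨xm, hxm⟩ := aux_exists_min (lam • h - L h)
      set e := (lam • h - L h) xm with he
      have hepos : 0 < e := by
        have := hh xm
        simp only [he, ContinuousMap.sub_apply, ContinuousMap.smul_apply, smul_eq_mul]
        linarith
      have hex : ∀ x, L h x ≤ lam * h x - e := fun x => by
        have := hxm x
        simp only [ContinuousMap.sub_apply (lam • h) (L h) x, ContinuousMap.smul_apply,
          smul_eq_mul] at this
        linarith
      have hN : 0 < ‖h‖ + 1 := by positivity
      obtain ⟨s, ⟨g, hg, hs⟩, hslt⟩ := exists_lt_of_csInf_lt hSne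
        (show sInf S < lam + e / (‖h‖ + 1) by
          have : 0 < e / (‖h‖ + 1) := by positivity
          linarith)
      have hls : lam ≤ s := csInf_le hSb ⟨g, hg, hs⟩
      let q : C(X, ℝ) := ⟨fun x => h x / g x,
        Continuous.div (by fun_prop) (by fun_prop) (fun x => (hg x).ne')⟩
      obtain ⟨x₀, hx₀⟩ := aux_exists_min q
      have hq0 : q x₀ ≤ 0 := (hx₀ x₁).trans (div_nonpos_of_nonpos_of_nonneg hx₁ (hg x₁).le)
      have hqx₀ : q x₀ * g x₀ = h x₀ := div_mul_cancel₀ _ (hg x₀).ne'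
      set c := q x₀ with hc
      have hnn : ∀ x, 0 ≤ (h - c • g) x := fun x => by
        have h2 : c ≤ h x / g x := hx₀ x
        rw [le_div_iff₀ (hg x)] at h2
        simp only [ContinuousMap.sub_apply, ContinuousMap.smul_apply, smul_eq_mul]
        linarith
      have h3 := hpos _ hnn x₀
      rw [map_sub, map_smul] at h3
      simp only [ContinuousMap.sub_apply, ContinuousMap.smul_apply, smul_eq_mul] at h3
      have h4 := hex x₀
      have h5 := mul_le_mul_of_nonpos_left (hs x₀) hq0
      have h6 : c * (s * g x₀) = s * h x₀ := by rw [← hqx₀]; ring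
      have h7 : -h x₀ ≤ ‖h‖ := (neg_le_abs _).trans (h.norm_coe_le_norm x₀)
      have h8 : (s - lam) * (‖h‖ + 1) < e := by
        rw [← lt_div_iff₀ hN]; linarith
      have h9 : (s - lam) * (-h x₀) ≤ (s - lam) * (‖h‖ + 1) :=
        mul_le_mul_of_nonneg_left (by linarith) (by linarith)
      linarith
  -- Hahn–Banach
  let P : Set C(X, ℝ) := {f | ∀ x, 0 < f x}
  let V : Submodule ℝ C(X, ℝ) := LinearMap.range (L - lam • LinearMap.id)
  have hPo : IsOpen P := by
    have := ContinuousMap.isOpen_setOf_mapsTo (X := X) (Y := ℝ) isCompact_univ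
      (isOpen_Ioi (a := (0 : ℝ)))
    convert this using 1
    ext f
    simp [P, Set.MapsTo]
  have hPc : Convex ℝ P := by
    intro f hf g hg a b ha hb hab x
    have := (convex_Ioi (0 : ℝ)) (hf x) (hg x) ha hb hab
    simpa using this
  have hdisj : Disjoint P (V : Set C(X, ℝ)) := by
    rw [Set.disjoint_left]
    rintro f hf ⟨h, rfl⟩
    refine hno (-h) (fun x => ?_)
    have := hf x
    simp at this
    simp
    linarith
  obtain ⟨F, u, hFP, hFV⟩ := geometric_hahn_banach_open hPc hPo V.convex hdisj
  have hu : u ≤ 0 := by simpa using hFV 0 V.zero_mem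
  have hV0 : ∀ v ∈ V, F v = 0 := by
    intro v hv
    by_contra hne
    have := hFV (((u - 1) / F v) • v) (V.smul_mem _ hv)
    rw [map_smul, smul_eq_mul, div_mul_cancel₀ _ hne] at this
    linarith
  have h1 : F 1 < 0 := (hFP 1 (fun x => by simp)).trans_le hu
  refine ⟨lam, (F 1)⁻¹ • F.toLinearMap, ?_, ?_, ?_⟩
  · intro f hf
    have : F f ≤ 0 := by
      refine le_of_forall_pos_le_add (fun ε hε => ?_)
      have hd : 0 < ε / (-F 1) := div_pos hε (by linarith)
      have h2 := (hFP (f + (ε / (-F 1)) • 1) (fun x => by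
        have := hf x
        simp
        linarith)).trans_le hu
      rw [map_add, map_smul, smul_eq_mul] at h2
      have : ε / (-F 1) * F 1 = -ε := by field_simp [h1.ne]
      linarith
    exact mul_nonneg_of_nonpos_of_nonpos (inv_nonpos.2 h1.le) this
  · exact inv_mul_cancel₀ h1.ne
  · intro f
    have := hV0 _ (LinearMap.mem_range_self (L - lam • LinearMap.id) f)
    simp only [LinearMap.sub_apply, LinearMap.smul_apply, LinearMap.id_apply, map_sub, map_smul,
      smul_eq_mul] at this
    have h2 : F (L f) = lam * F f := by linarith
    change (F 1)⁻¹ * F (L f) = lam * ((F 1)⁻¹ * F f)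
    rw [h2]; ring

/-- For a rational-like map `T` acting on its (compact) Julia set, with
local degree function `deg`, finite nonempty fibers, and transfer operator `ℒ_φ`
preserving continuity, there exist `λ > 0` and a Borel probability measure `η` with
`ℒ_φ* η = λ η` (expressed weakly against continuous test functions). -/
theorem stmt_9 {X : Type*} [MetricSpace X] [CompactSpace X] [Nonempty X]
    [MeasurableSpace X] [BorelSpace X]
    (T : X → X) (hT : Continuous T)
    (deg : X → ℕ) (hdeg : ∀ y, 1 ≤ deg y)
    (hfib : ∀ x, (T ⁻¹' {x}).Finite) (hfibne : ∀ x, (T ⁻¹' {x}).Nonempty)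
    (φ : C(X, ℝ))
    (hL : ∀ ψ : C(X, ℝ), Continuous (transferOp T deg ⇑φ ⇑ψ)) :
    ∃ (lam : ℝ) (η : ProbabilityMeasure X), 0 < lam ∧
      ∀ ψ : C(X, ℝ), ∫ x, transferOp T deg ⇑φ ⇑ψ x ∂(η : Measure X) =
        lam * ∫ x, ψ x ∂(η : Measure X) := by
  have hsum : ∀ (ψ : X → ℝ) (x : X), transferOp T deg ⇑φ ψ x =
      ∑ y ∈ (hfib x).toFinset, (deg y : ℝ) * Real.exp (φ y) * ψ y := fun ψ x =>
    finsum_mem_eq_finite_toFinset_sum _ (hfib x)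
  let L : C(X, ℝ) →ₗ[ℝ] C(X, ℝ) :=
    { toFun := fun ψ => ⟨transferOp T deg ⇑φ ⇑ψ, hL ψ⟩
      map_add' := fun f g => by
        ext x
        simp [hsum, mul_add, Finset.sum_add_distrib]
      map_smul' := fun c f => by
        ext x
        simp only [ContinuousMap.coe_mk, hsum, ContinuousMap.smul_apply, smul_eq_mul,
          RingHom.id_apply, Finset.mul_sum]
        exact Finset.sum_congr rfl (fun y _ => by ring) }
  have hLa : ∀ ψ x, L ψ x = transferOp T deg ⇑φ ⇑ψ x := fun _ _ => rfl
  have hLpos : ∀ f : C(X, ℝ), (∀ x, 0 ≤ f x) → ∀ x, 0 ≤ L f x := by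
    intro f hf x
    rw [hLa, hsum]
    exact Finset.sum_nonneg (fun y _ => mul_nonneg (by positivity) (hf y))
  have hL1 : ∀ x, 0 < L 1 x := by
    intro x
    rw [hLa, hsum]
    refine Finset.sum_pos (fun y _ => ?_) (by simpa using hfibne x)
    have : (0 : ℝ) < deg y := by exact_mod_cast hdeg y
    have := Real.exp_pos (φ y)
    simp only [ContinuousMap.one_apply]
    positivity
  obtain ⟨lam, F, hF, hF1, hFL⟩ := aux_eigen L hLpos
  obtain ⟨η, hη⟩ := aux_riesz F hF hF1
  refine ⟨lam, η, ?_, fun ψ => ?_⟩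
  · obtain ⟨x₀, hx₀⟩ := aux_exists_min (L 1)
    have h2 := hF (L 1 - (L 1 x₀) • 1) (fun x => by simpa using hx₀ x)
    rw [map_sub, map_smul, hFL, hF1, smul_eq_mul] at h2
    have := hL1 x₀
    linarith
  · rw [hη ψ, ← hFL ψ, ← hη (L ψ)]
    rfl
end
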